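/- Let K be a field and X a type with at least two distinct elements. Then the free Lie algebra FreeLieAlgebra K X is anticommutative: (1) every Lie ideal I of FreeLieAlgebra K X with I ≠ ⊥ satisfies ⁅I, I⁆ ≠ ⊥ (no nonzero abelian Lie ideal), and (2) for all Lie ideals I, J of FreeLieAlgebra K X with I ≠ ⊥ and J ≠ ⊥, I ⊓ J ≠ ⊥. -/

import Mathlib

/-!
The free Lie algebra `L(X)` embeds in the free associative algebra `A(X)` over any commutative
ring. To see that an element `a` of the kernel vanishes, use Lazard elimination of a generator `x`:
`a` is a multiple of `x` plus an element of the subalgebra generated by the `(ad x)ⁿ y`, `y ≠ x`.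
The multiple is zero since `a` dies in `A(X)`, and rewriting `a` in the new generators makes it
simpler: either its brackets get shorter, or its longest brackets involve one generator less.
Nothing is lost on the associative side, because `A(X)` acts on the free algebra on the symbols
`(ad x)ⁿ y`, with `x` acting as the derivation `(ad x)ⁿ y ↦ (ad x)ⁿ⁺¹ y`.

If now `⁅I, J⁆ = 0` with `a ∈ I`, `b ∈ J` nonzero, let `u`, `v` be the leading words of `a`, `b`
for the degree-lexicographic order. A generator `t` not commuting with `v` would make `t * v` or
`v * t` the leading word of `⁅t, b⁆ ∈ J`. As `a` commutes with `b` and `⁅t, b⁆`, the word `u` would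
commute with `v` and with `t`, hence be a power of `t`, and so would `v`. So `v` commutes with all
generators, which forces `v = 1`; but elements of `L(X)` have no constant term.
-/

namespace FreeLie

open FreeLieAlgebra

attribute [local instance] LieRing.ofAssociativeRing

section Filtration

variable {R X : Type*} [CommRing R] {S T : Set X} {m n : ℕ} {a b : FreeLieAlgebra R X}

theorem lieSubalgebra_eq_top_of_forall_of_mem {L : LieSubalgebra R (FreeLieAlgebra R X)}
    (hL : ∀ x, of R x ∈ L) : L = ⊤ := by
  let f : FreeLieAlgebra R X →ₗ⁅R⁆ L := lift R fun x ↦ ⟨of R x, hL x⟩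
  have hf : L.incl.comp f = LieHom.id := by
    ext x
    simp [f]
  refine eq_top_iff.2 fun a _ ↦ ?_
  have ha : (f a : FreeLieAlgebra R X) = a := DFunLike.congr_fun hf a
  exact ha ▸ (f a).2

/-- `IsBracket S n a` says that `a` is an iterated bracket of `n` generators, counted with
multiplicity and with any bracketing, all taken from `S`. -/
inductive IsBracket (S : Set X) : ℕ → FreeLieAlgebra R X → Prop
  | of {x : X} : x ∈ S → IsBracket S 1 (of R x)
  | lie {m n : ℕ} {a b : FreeLieAlgebra R X} :
      IsBracket S m a → IsBracket S n b → IsBracket S (m + n) ⁅a, b⁆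

namespace IsBracket

theorem mono (h : S ⊆ T) (ha : IsBracket S n a) : IsBracket T n a := by
  induction ha with
  | of hx => exact .of (h hx)
  | lie _ _ iha ihb => exact iha.lie ihb

theorem pos (ha : IsBracket S n a) : 0 < n := by
  induction ha with
  | of => exact one_pos
  | lie _ _ iha => exact Nat.add_pos_left iha _

theorem nonempty (ha : IsBracket S n a) : S.Nonempty := by
  induction ha with
  | of hx => exact ⟨_, hx⟩
  | lie _ _ iha => exact iha

theorem exists_finset (ha : IsBracket S n a) : ∃ T : Finset X, IsBracket (T : Set X) n a := by
  classical
  induction ha with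
  | @of x _ => exact ⟨{x}, .of (by simp)⟩
  | lie _ _ iha ihb =>
    obtain ⟨T, hT⟩ := iha
    obtain ⟨U, hU⟩ := ihb
    exact ⟨T ∪ U, (hT.mono (by simp)).lie (hU.mono (by simp))⟩

end IsBracket

/-- The span of all brackets of fewer than `n` generators and of the brackets of `n` generators
from `S`. It is the measure of complexity for the elimination argument: only the longest brackets
are restricted to `S`, so that the number of generators in them is finite. -/
noncomputable def filtration (R : Type*) [CommRing R] (S : Set X) (n : ℕ) :
    Submodule R (FreeLieAlgebra R X) :=
  Submodule.span R {a | (∃ k < n, IsBracket Set.univ k a) ∨ IsBracket S n a}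

theorem IsBracket.mem_filtration (ha : IsBracket S n a) : a ∈ filtration R S n :=
  Submodule.subset_span (Or.inr ha)

theorem IsBracket.mem_filtration_of_lt (ha : IsBracket S m a) (h : m < n) :
    a ∈ filtration R T n :=
  Submodule.subset_span (Or.inl ⟨m, h, ha.mono S.subset_univ⟩)

theorem filtration_le_iff {N : Submodule R (FreeLieAlgebra R X)} :
    filtration R S n ≤ N ↔
      (∀ k < n, ∀ a, IsBracket Set.univ k a → a ∈ N) ∧ ∀ a, IsBracket S n a → a ∈ N := by
  rw [filtration, Submodule.span_le]
  constructor
  · exact fun h ↦ ⟨fun k hk a ha ↦ h (Or.inl ⟨k, hk, ha⟩), fun a ha ↦ h (Or.inr ha)⟩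
  · rintro ⟨hlt, hS⟩ a (⟨k, hk, ha⟩ | ha)
    · exact hlt k hk a ha
    · exact hS a ha

theorem filtration_mono (h : S ⊆ T) : filtration R S n ≤ filtration R T n :=
  filtration_le_iff.2 ⟨fun _ hk _ ha ↦ ha.mem_filtration_of_lt hk,
    fun _ ha ↦ (ha.mono h).mem_filtration⟩

theorem filtration_le_of_lt (h : m < n) : filtration R S m ≤ filtration R T n :=
  filtration_le_iff.2 ⟨fun _ hk _ ha ↦ ha.mem_filtration_of_lt (hk.trans h),
    fun _ ha ↦ ha.mem_filtration_of_lt h⟩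

theorem lie_mem_filtration (ha : a ∈ filtration R S m) (hb : b ∈ filtration R S n) :
    ⁅a, b⁆ ∈ filtration R S (m + n) := by
  refine LinearMap.BilinMap.apply_apply_mem_of_mem_span _ _ _
    (LieModule.toEnd R (FreeLieAlgebra R X) (FreeLieAlgebra R X)).toLinearMap ?_ a b ha hb
  rintro a (⟨k, hk, ha⟩ | ha) b (⟨l, hl, hb⟩ | hb)
  · exact (ha.lie hb).mem_filtration_of_lt (add_lt_add hk hl)
  · exact (ha.lie (hb.mono S.subset_univ)).mem_filtration_of_lt (Nat.add_lt_add_right hk n)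
  · exact ((ha.mono S.subset_univ).lie hb).mem_filtration_of_lt (Nat.add_lt_add_left hl m)
  · exact (ha.lie hb).mem_filtration

theorem filtration_zero (S : Set X) : filtration R S 0 = ⊥ :=
  le_bot_iff.1 <| filtration_le_iff.2
    ⟨fun _ hk ↦ absurd hk (Nat.not_lt_zero _), fun _ ha ↦ absurd ha.pos (lt_irrefl 0)⟩

theorem filtration_empty_succ_le (n : ℕ) :
    filtration R (∅ : Set X) (n + 1) ≤ filtration R Set.univ n := by
  refine filtration_le_iff.2 ⟨fun k hk a ha ↦ ?_,
    fun a ha ↦ absurd ha.nonempty Set.not_nonempty_empty⟩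
  rcases Nat.lt_succ_iff_lt_or_eq.1 hk with h | rfl
  · exact ha.mem_filtration_of_lt h
  · exact ha.mem_filtration

theorem exists_finset_mem_filtration (ha : a ∈ filtration R Set.univ n) :
    ∃ T : Finset X, a ∈ filtration R (T : Set X) n := by
  classical
  have hmono : Monotone fun T : Finset X ↦ filtration R (T : Set X) n :=
    fun _ _ h ↦ filtration_mono (Finset.coe_subset.2 h)
  have hle : filtration R (Set.univ : Set X) n ≤ ⨆ T : Finset X, filtration R (T : Set X) n := by
    refine filtration_le_iff.2 ⟨fun k hk b hb ↦ ?_, fun b hb ↦ ?_⟩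
    · exact Submodule.mem_iSup_of_mem ∅ (hb.mem_filtration_of_lt hk)
    · obtain ⟨T, hT⟩ := hb.exists_finset
      exact Submodule.mem_iSup_of_mem T hT.mem_filtration
  exact (Submodule.mem_iSup_of_directed _ hmono.directed_le).1 (hle ha)

theorem exists_mem_filtration (a : FreeLieAlgebra R X) : ∃ n, a ∈ filtration R Set.univ n := by
  let L : LieSubalgebra R (FreeLieAlgebra R X) :=
    { carrier := {a | ∃ n, a ∈ filtration R Set.univ n}
      zero_mem' := ⟨0, zero_mem _⟩
      add_mem' := by
        rintro a b ⟨m, hm⟩ ⟨n, hn⟩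
        exact ⟨m + n + 1, add_mem (filtration_le_of_lt (by omega) hm)
          (filtration_le_of_lt (by omega) hn)⟩
      smul_mem' := fun c _ ⟨n, hn⟩ ↦ ⟨n, Submodule.smul_mem _ c hn⟩
      lie_mem' := fun ⟨m, hm⟩ ⟨n, hn⟩ ↦ ⟨m + n, lie_mem_filtration hm hn⟩ }
  have hL : L = ⊤ := lieSubalgebra_eq_top_of_forall_of_mem fun x ↦
    ⟨1, (IsBracket.of (Set.mem_univ x)).mem_filtration⟩
  exact (hL ▸ LieSubalgebra.mem_top a : a ∈ L)

end Filtration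

section Elimination

variable {R X : Type*} [CommRing R] {x : X} {S : Set X} {n : ℕ} {a : FreeLieAlgebra R X}

/-- The generators of the free Lie algebra obtained by eliminating `x`: the pair `(y, n)` stands
for `(ad x)ⁿ y`. -/
abbrev ElimGen (x : X) : Type _ := {y : X // y ≠ x} × ℕ

/-- The Lie algebra map sending the generator `(y, n)` to `(ad x)ⁿ y`. -/
noncomputable def elim (R : Type*) [CommRing R] (x : X) :
    FreeLieAlgebra R (ElimGen x) →ₗ⁅R⁆ FreeLieAlgebra R X :=
  lift R fun z ↦ (LieAlgebra.ad R (FreeLieAlgebra R X) (of R x) ^ z.2) (of R z.1.1)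

theorem elim_of_zero (y : {y : X // y ≠ x}) : elim R x (of R (y, 0)) = of R y.1 := by
  simp [elim]

theorem elim_of_succ (y : {y : X // y ≠ x}) (n : ℕ) :
    elim R x (of R (y, n + 1)) = ⁅of R x, elim R x (of R (y, n))⁆ := by
  simp [elim, pow_succ']

theorem lie_elim_mem_map_of_isBracket {S : Set (ElimGen x)} {b : FreeLieAlgebra R (ElimGen x)}
    (hb : IsBracket S n b) :
    ⁅of R x, elim R x b⁆ ∈ (filtration R Set.univ n).map (elim R x).toLinearMap := by
  induction hb with
  | @of z _ =>
    exact ⟨of R (z.1, z.2 + 1), (IsBracket.of (Set.mem_univ _)).mem_filtration,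
      elim_of_succ z.1 z.2⟩
  | @lie m n a b ha hb iha ihb =>
    obtain ⟨c, hc, hac : elim R x c = _⟩ := iha
    obtain ⟨d, hd, hbd : elim R x d = _⟩ := ihb
    refine ⟨⁅c, b⁆ + ⁅a, d⁆, add_mem
      (lie_mem_filtration hc (hb.mono (Set.subset_univ _)).mem_filtration)
      (lie_mem_filtration (ha.mono (Set.subset_univ _)).mem_filtration hd), ?_⟩
    rw [LieHom.coe_toLinearMap, map_add, LieHom.map_lie, LieHom.map_lie, LieHom.map_lie, hac, hbd,
      ← leibniz_lie]

theorem lie_elim_mem_map {S : Set (ElimGen x)} {b : FreeLieAlgebra R (ElimGen x)}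
    (hb : b ∈ filtration R S n) :
    ⁅of R x, elim R x b⁆ ∈ (filtration R Set.univ n).map (elim R x).toLinearMap := by
  have hle : filtration R S n ≤ ((filtration R Set.univ n).map (elim R x).toLinearMap).comap
      (LieAlgebra.ad R (FreeLieAlgebra R X) (of R x) ∘ₗ (elim R x).toLinearMap) :=
    filtration_le_iff.2 ⟨fun k hk b hb ↦
      Submodule.map_mono (filtration_le_of_lt hk) (lie_elim_mem_map_of_isBracket hb),
      fun b hb ↦ lie_elim_mem_map_of_isBracket hb⟩
  exact hle hb

/-- The generators from `S` that survive the elimination of `x`, as generators of the eliminated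
algebra. -/
def elimSet (x : X) (S : Set X) : Set (ElimGen x) :=
  (Subtype.val ⁻¹' S) ×ˢ {0}

theorem encard_elimSet_add_one (hx : x ∈ S) : (elimSet x S).encard + 1 = S.encard := by
  rw [elimSet, Set.encard_prod, Set.encard_singleton, mul_one,
    ← Subtype.val_injective.encard_image, Set.image_preimage_eq_inter_range,
    Subtype.range_val_subtype]
  exact Set.encard_sdiff_singleton_add_one hx

/- A bracket of at least two generators that involves `x` becomes a combination of strictly shorter
brackets, so that those of full length only use generators from `elimSet x S`. -/
theorem eq_of_or_mem_map_elim_of_isBracket (ha : IsBracket S n a) :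
    (n = 1 ∧ a = of R x) ∨
      a ∈ (filtration R (elimSet x S) n).map (elim R x).toLinearMap := by
  induction ha with
  | @of y hy =>
    by_cases h : y = x
    · exact Or.inl ⟨rfl, by rw [h]⟩
    · exact Or.inr ⟨of R (⟨y, h⟩, 0),
        (IsBracket.of (show (⟨y, h⟩, 0) ∈ elimSet x S from ⟨hy, rfl⟩)).mem_filtration,
        elim_of_zero ⟨y, h⟩⟩
  | @lie m n a b _ _ iha ihb =>
    right
    rcases iha with ⟨rfl, rfl⟩ | ⟨c, hc, rfl⟩ <;> rcases ihb with ⟨rfl, rfl⟩ | ⟨d, hd, rfl⟩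
    · simp
    · exact Submodule.map_mono (filtration_le_of_lt (by omega)) (lie_elim_mem_map hd)
    · rw [← lie_skew]
      exact neg_mem
        (Submodule.map_mono (filtration_le_of_lt (by omega)) (lie_elim_mem_map hc))
    · exact ⟨⁅c, d⁆, lie_mem_filtration hc hd, LieHom.map_lie _ c d⟩

theorem exists_eq_smul_add_elim (x : X) (ha : a ∈ filtration R S n) :
    ∃ c : R, ∃ b ∈ filtration R (elimSet x S) n, a = c • of R x + elim R x b := by
  have hof : of R x ∈ Submodule.span R {of R x} ⊔
      (filtration R (elimSet x S) n).map (elim R x).toLinearMap :=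
    Submodule.mem_sup_left (Submodule.mem_span_singleton_self _)
  have hle : filtration R S n ≤ Submodule.span R {of R x} ⊔
      (filtration R (elimSet x S) n).map (elim R x).toLinearMap := by
    refine filtration_le_iff.2 ⟨fun k hk b hb ↦ ?_, fun b hb ↦ ?_⟩ <;>
      rcases eq_of_or_mem_map_elim_of_isBracket (x := x) hb with ⟨-, rfl⟩ | hb
    · exact hof
    · exact Submodule.mem_sup_right (Submodule.map_mono (filtration_le_of_lt hk) hb)
    · exact hof
    · exact Submodule.mem_sup_right hb
  obtain ⟨_, hc, _, ⟨b, hb, rfl⟩, rfl⟩ := Submodule.mem_sup.1 (hle ha)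
  obtain ⟨c, rfl⟩ := Submodule.mem_span_singleton.1 hc
  exact ⟨c, b, hb, rfl⟩

end Elimination

section Derivation

variable {R X : Type*} [CommSemiring R]

/-- The algebra map `t ↦ t + ε D t` to the trivial square-zero extension, where `D` is the
derivation of the free algebra extending `f`. -/
noncomputable def dualDerivation (f : X → FreeAlgebra R X) :
    FreeAlgebra R X →ₐ[R] TrivSqZeroExt (FreeAlgebra R X) (FreeAlgebra R X) :=
  FreeAlgebra.lift R fun y ↦ TrivSqZeroExt.inl (FreeAlgebra.ι R y) + TrivSqZeroExt.inr (f y)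

theorem fst_dualDerivation (f : X → FreeAlgebra R X) (t : FreeAlgebra R X) :
    (dualDerivation f t).fst = t := by
  have h : (TrivSqZeroExt.fstHom R (FreeAlgebra R X) (FreeAlgebra R X)).comp (dualDerivation f) =
      AlgHom.id R _ := by
    ext y
    simp [dualDerivation]
  exact DFunLike.congr_fun h t

/-- The derivation of the free algebra extending a map on the generators. It is only a linear map
here, since `Derivation` is restricted to commutative algebras. -/
noncomputable def derivation (f : X → FreeAlgebra R X) : Module.End R (FreeAlgebra R X) where
  toFun t := (dualDerivation f t).snd
  map_add' := by simp
  map_smul' := by simp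

@[simp]
theorem derivation_ι (f : X → FreeAlgebra R X) (y : X) :
    derivation f (FreeAlgebra.ι R y) = f y := by
  simp [derivation, dualDerivation]

theorem derivation_mul (f : X → FreeAlgebra R X) (s t : FreeAlgebra R X) :
    derivation f (s * t) = s * derivation f t + derivation f s * t := by
  simp [derivation, fst_dualDerivation]

end Derivation

section Embedding

/-- The canonical map from the free Lie algebra to the free associative algebra. -/
noncomputable def toFreeAlgebra (R X : Type*) [CommRing R] :
    FreeLieAlgebra R X →ₗ⁅R⁆ FreeAlgebra R X :=
  lift R (FreeAlgebra.ι R)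

variable {R X : Type*} [CommRing R] {x : X} {S : Set X} {n : ℕ} {a : FreeLieAlgebra R X}

@[simp]
theorem toFreeAlgebra_of (x : X) : toFreeAlgebra R X (of R x) = FreeAlgebra.ι R x :=
  lift_of_apply _ _

open Classical in
/-- The representation of `A(X)` on the free algebra on the symbols `(ad x)ⁿ y` in which `x` acts
as the derivation sending `(ad x)ⁿ y` to `(ad x)ⁿ⁺¹ y` and every other generator acts by left
multiplication. -/
noncomputable def elimRep (R : Type*) [CommRing R] (x : X) :
    FreeAlgebra R X →ₐ[R] Module.End R (FreeAlgebra R (ElimGen x)) :=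
  FreeAlgebra.lift R fun y ↦
    if h : y = x then derivation fun z ↦ FreeAlgebra.ι R (z.1, z.2 + 1)
    else Algebra.lmul R _ (FreeAlgebra.ι R (⟨y, h⟩, 0))

theorem elimRep_toFreeAlgebra_elim_of (y : {y : X // y ≠ x}) (n : ℕ) :
    elimRep R x (toFreeAlgebra R X (elim R x (of R (y, n)))) =
      Algebra.lmul R _ (FreeAlgebra.ι R (y, n)) := by
  induction n with
  | zero => simp [elim_of_zero, elimRep, y.2]
  | succ n ih =>
    rw [elim_of_succ, LieHom.map_lie, LieRing.of_associative_ring_bracket, map_sub, map_mul,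
      map_mul, ih, toFreeAlgebra_of]
    ext t
    simp [elimRep, derivation_mul]

theorem elimRep_toFreeAlgebra_elim (b : FreeLieAlgebra R (ElimGen x)) :
    elimRep R x (toFreeAlgebra R X (elim R x b)) =
      Algebra.lmul R _ (toFreeAlgebra R (ElimGen x) b) := by
  have h : ((elimRep R x : _ →ₗ⁅R⁆ _).comp (toFreeAlgebra R X)).comp (elim R x) =
      (Algebra.lmul R (FreeAlgebra R (ElimGen x))).toLieHom.comp (toFreeAlgebra R (ElimGen x)) := by
    ext1 z
    simpa using elimRep_toFreeAlgebra_elim_of z.1 z.2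
  exact DFunLike.congr_fun h b

theorem toFreeAlgebra_eq_zero_of_elim {b : FreeLieAlgebra R (ElimGen x)}
    (hb : toFreeAlgebra R X (elim R x b) = 0) : toFreeAlgebra R (ElimGen x) b = 0 := by
  have h := elimRep_toFreeAlgebra_elim b
  rw [hb, map_zero] at h
  simpa using (DFunLike.congr_fun h 1).symm

theorem eq_zero_of_toFreeAlgebra_smul_of_add_elim {c : R} {b : FreeLieAlgebra R (ElimGen x)}
    (h : toFreeAlgebra R X (c • of R x + elim R x b) = 0) : c = 0 := by
  classical
  let ε : FreeAlgebra R X →ₐ[R] R := FreeAlgebra.lift R fun y ↦ if y = x then 1 else 0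
  have hε : ((ε : _ →ₗ⁅R⁆ R).comp (toFreeAlgebra R X)).comp (elim R x) = 0 := by
    ext ⟨y, n⟩
    cases n with
    | zero => simp [elim_of_zero, ε, y.2]
    | succ n => simp [elim_of_succ, LieRing.of_associative_ring_bracket, mul_comm]
  have hb : ε (toFreeAlgebra R X (elim R x b)) = 0 := DFunLike.congr_fun hε b
  simpa [hb, ε] using congrArg ε h

theorem exists_eq_elim_of_toFreeAlgebra_eq_zero (x : X) (ha : a ∈ filtration R S n)
    (h : toFreeAlgebra R X a = 0) :
    ∃ b ∈ filtration R (elimSet x S) n, toFreeAlgebra R (ElimGen x) b = 0 ∧ a = elim R x b := by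
  obtain ⟨c, b, hb, rfl⟩ := exists_eq_smul_add_elim x ha
  obtain rfl : c = 0 := eq_zero_of_toFreeAlgebra_smul_of_add_elim h
  rw [zero_smul, zero_add] at h ⊢
  exact ⟨b, hb, toFreeAlgebra_eq_zero_of_elim h, rfl⟩

end Embedding

universe u

theorem eq_zero_of_mem_filtration_of_toFreeAlgebra_eq_zero {R : Type*} [CommRing R] :
    ∀ (n r : ℕ) {X : Type u} {S : Set X} {a : FreeLieAlgebra R X}, S.encard = r →
      a ∈ filtration R S n → toFreeAlgebra R X a = 0 → a = 0
  | 0, _, _, S, _, _, ha, _ => by simpa [filtration_zero S] using ha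
  | n + 1, 0, _, S, _, hS, ha, h => by
    obtain rfl : S = ∅ := by simpa using hS
    obtain ⟨T, hT⟩ := exists_finset_mem_filtration (filtration_empty_succ_le n ha)
    exact eq_zero_of_mem_filtration_of_toFreeAlgebra_eq_zero n T.card
      (Set.encard_coe_eq_coe_finsetCard T) hT h
  | n + 1, r + 1, _, S, _, hS, ha, h => by
    obtain ⟨x, hx⟩ : S.Nonempty := Set.encard_ne_zero.1 (by simp [hS])
    obtain ⟨b, hb, hb0, rfl⟩ := exists_eq_elim_of_toFreeAlgebra_eq_zero x ha h
    have hr : (elimSet x S).encard = r := by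
      simpa [hS] using encard_elimSet_add_one hx
    rw [eq_zero_of_mem_filtration_of_toFreeAlgebra_eq_zero (n + 1) r hr hb hb0, map_zero]

theorem toFreeAlgebra_injective (R X : Type*) [CommRing R] :
    Function.Injective (toFreeAlgebra R X) := by
  refine (injective_iff_map_eq_zero _).2 fun a ha ↦ ?_
  obtain ⟨n, hn⟩ := exists_mem_filtration a
  obtain ⟨T, hT⟩ := exists_finset_mem_filtration hn
  exact eq_zero_of_mem_filtration_of_toFreeAlgebra_eq_zero n T.card
    (Set.encard_coe_eq_coe_finsetCard T) hT ha

section Leading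

open MonoidAlgebra

/-- `u` is the leading monomial of `a`, the largest element of its support; the zero element has
none. -/
def IsLeading {R M : Type*} [Semiring R] [LinearOrder M] (a : MonoidAlgebra R M) (u : M) : Prop :=
  IsGreatest (a.coeff.support : Set M) u

section Semiring

variable {R M : Type*} [Semiring R] [LinearOrder M] {a b : MonoidAlgebra R M} {u v w : M}

theorem exists_isLeading (ha : a ≠ 0) : ∃ u, IsLeading a u :=
  ⟨_, Finset.isGreatest_max' _ (Finsupp.support_nonempty_iff.2 (by simpa using ha))⟩

theorem isLeading_single (u : M) {r : R} (hr : r ≠ 0) : IsLeading (single u r) u := by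
  refine ⟨by simpa using hr, fun w hw ↦ ?_⟩
  exact (Finset.mem_singleton.1 (Finsupp.support_single_subset hw)).le

namespace IsLeading

theorem coeff_ne_zero (ha : IsLeading a u) : a.coeff u ≠ 0 :=
  Finsupp.mem_support_iff.1 ha.1

theorem coeff_eq_zero_of_lt (ha : IsLeading a u) (h : u < w) : a.coeff w = 0 := by
  by_contra hw
  exact (ha.2 (Finsupp.mem_support_iff.2 hw)).not_gt h

variable [Monoid M] [MulLeftStrictMono M] [MulRightStrictMono M] [NoZeroDivisors R]

theorem mul (ha : IsLeading a u) (hb : IsLeading b v) : IsLeading (a * b) (u * v) := by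
  classical
  have := mulLeftMono_of_mulLeftStrictMono M
  have := mulRightMono_of_mulRightStrictMono M
  constructor
  · have huv : UniqueMul a.coeff.support b.coeff.support u v := fun p q hp hq ↦
      (mul_eq_mul_iff_eq_and_eq (ha.2 hp) (hb.2 hq)).1
    rw [Finset.mem_coe, Finsupp.mem_support_iff, coeff_mul_mul_of_uniqueMul huv]
    exact mul_ne_zero ha.coeff_ne_zero hb.coeff_ne_zero
  · intro w hw
    obtain ⟨p, hp, q, hq, rfl⟩ := Finset.mem_mul.1 (support_coeff_mul_subset a b hw)
    exact mul_le_mul' (ha.2 hp) (hb.2 hq)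

theorem commute (ha : IsLeading a u) (hb : IsLeading b v) (h : Commute a b) : Commute u v :=
  (h.eq ▸ ha.mul hb).unique (hb.mul ha)

end IsLeading

end Semiring

namespace IsLeading

variable {R M : Type*} [Ring R] [LinearOrder M] {a b : MonoidAlgebra R M} {u v : M}

theorem sub_of_lt (ha : IsLeading a u) (hb : IsLeading b v) (h : v < u) :
    IsLeading (a - b) u := by
  constructor
  · simpa [hb.coeff_eq_zero_of_lt h] using ha.coeff_ne_zero
  · intro w hw
    by_contra! hlt
    refine Finsupp.mem_support_iff.1 hw ?_
    simp [ha.coeff_eq_zero_of_lt hlt, hb.coeff_eq_zero_of_lt (h.trans hlt)]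

theorem neg (ha : IsLeading a u) : IsLeading (-a) u := by
  simpa only [IsLeading, coeff_neg, Finsupp.support_neg] using ha

theorem sub_of_ne (ha : IsLeading a u) (hb : IsLeading b v) (h : u ≠ v) :
    IsLeading (a - b) u ∨ IsLeading (a - b) v := by
  rcases h.lt_or_gt with h | h
  · exact Or.inr (neg_sub b a ▸ (hb.sub_of_lt ha h).neg)
  · exact Or.inl (ha.sub_of_lt hb h)

end IsLeading

end Leading

section DegLex

variable {X : Type*} [LinearOrder X]

/-- The degree-lexicographic order on words: first by length, then lexicographically. -/
abbrev degLex (X : Type*) [LinearOrder X] : LinearOrder (FreeMonoid X) :=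
  LinearOrder.lift' (fun w ↦ toLex (w.length, w.toList)) fun _ _ h ↦
    FreeMonoid.toList.injective (congrArg Prod.snd (toLex.injective h))

attribute [local instance] degLex

theorem degLex_lt_iff {v w : FreeMonoid X} :
    v < w ↔ v.length < w.length ∨ v.length = w.length ∧ v.toList < w.toList :=
  Prod.Lex.toLex_lt_toLex

theorem append_lt_append_right_of_length_eq (t : List X) :
    ∀ {v w : List X}, v.length = w.length → v < w → v ++ t < w ++ t
  | [], [], _, h => absurd h (lt_irrefl _)
  | a :: v, b :: w, hl, h => by
    rw [List.cons_append, List.cons_append, List.cons_lt_cons_iff]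
    exact (List.cons_lt_cons_iff.1 h).imp_right <| And.imp_right <|
      append_lt_append_right_of_length_eq t (Nat.succ.inj hl)

theorem degLex_mulLeftStrictMono : MulLeftStrictMono (FreeMonoid X) where
  elim u v w h := degLex_lt_iff.2 <| (degLex_lt_iff.1 h).imp
    (fun hl ↦ by simpa using hl) fun ⟨hl, hlt⟩ ↦ ⟨by simpa using hl, List.append_left_lt hlt⟩

theorem degLex_mulRightStrictMono : MulRightStrictMono (FreeMonoid X) where
  elim u v w h := degLex_lt_iff.2 <| (degLex_lt_iff.1 h).imp
    (fun hl ↦ by simpa [Function.swap] using hl) fun ⟨hl, hlt⟩ ↦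
      ⟨by simpa [Function.swap] using hl, append_lt_append_right_of_length_eq _ hl hlt⟩

end DegLex

section Words

theorem commute_of_commute_mul_left {M : Type*} [Semigroup M] [IsLeftCancelMul M] {a b c : M}
    (ha : Commute a c) (hab : Commute (a * b) c) : Commute b c := by
  refine mul_left_cancel (a := a) ?_
  rw [← mul_assoc, hab.eq, ← mul_assoc, ← ha.eq, mul_assoc]

theorem commute_of_commute_mul_right {M : Type*} [Semigroup M] [IsRightCancelMul M] {a b c : M}
    (hb : Commute b c) (hab : Commute (a * b) c) : Commute a c := by
  refine mul_right_cancel (b := b) ?_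
  rw [mul_assoc, ← hb.eq, ← mul_assoc, hab.eq, mul_assoc]

variable {X : Type*} {s t x y : X} {u v w : FreeMonoid X}

theorem head_eq_of_commute (h : Commute (FreeMonoid.of s * v) (FreeMonoid.of t * w)) : s = t :=
  (List.cons.inj (congrArg FreeMonoid.toList h.eq)).1

theorem commute_of_of_commute_of_pow_succ {n : ℕ} (h : Commute v (FreeMonoid.of t ^ (n + 1))) :
    Commute v (FreeMonoid.of t) := by
  induction v using FreeMonoid.inductionOn' with
  | one => exact Commute.one_left _
  | of_mul s v ih =>
    obtain rfl : s = t := head_eq_of_commute (pow_succ' (FreeMonoid.of t) n ▸ h)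
    exact (Commute.refl _).mul_left
      (ih (commute_of_commute_mul_left (Commute.self_pow _ _) h))

theorem exists_eq_of_pow_of_commute_of (h : Commute v (FreeMonoid.of t)) :
    ∃ n, v = FreeMonoid.of t ^ n := by
  induction v using FreeMonoid.inductionOn' with
  | one => exact ⟨0, (pow_zero _).symm⟩
  | of_mul s v ih =>
    obtain rfl : s = t := head_eq_of_commute (w := 1) (by simpa using h)
    obtain ⟨n, rfl⟩ := ih (commute_of_commute_mul_left (Commute.refl _) h)
    exact ⟨n + 1, (pow_succ' _ _).symm⟩

theorem commute_of_of_commute (hu : u ≠ 1) (huv : Commute u v) (hut : Commute u (FreeMonoid.of t)) :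
    Commute v (FreeMonoid.of t) := by
  obtain ⟨n, rfl⟩ := exists_eq_of_pow_of_commute_of hut
  cases n with
  | zero => exact absurd (pow_zero _) hu
  | succ n => exact commute_of_of_commute_of_pow_succ huv.symm

theorem eq_one_of_commute_of (hxy : x ≠ y) (hx : Commute v (FreeMonoid.of x))
    (hy : Commute v (FreeMonoid.of y)) : v = 1 := by
  by_contra hv
  have h : Commute (FreeMonoid.of x * 1) (FreeMonoid.of y * 1) := by
    simpa using commute_of_of_commute hv hx hy
  exact hxy (head_eq_of_commute h)

end Words

section LeadingWords

open MonoidAlgebra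

theorem coeff_mul_one {R X : Type*} [Semiring R] (p q : MonoidAlgebra R (FreeMonoid X)) :
    (p * q).coeff 1 = p.coeff 1 * q.coeff 1 := by
  have h : UniqueMul p.coeff.support q.coeff.support 1 1 := fun _ _ _ _ ↦ by simp
  simpa using coeff_mul_mul_of_uniqueMul h

variable {R X : Type*} [CommRing R]

/-- The canonical map from the free Lie algebra to the free associative algebra, seen as the monoid
algebra of the monoid of words. -/
noncomputable def toMonoidAlgebra (R X : Type*) [CommRing R] :
    FreeLieAlgebra R X →ₗ⁅R⁆ MonoidAlgebra R (FreeMonoid X) :=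
  (FreeAlgebra.equivMonoidAlgebraFreeMonoid (R := R) (X := X)).toAlgHom.toLieHom.comp
    (toFreeAlgebra R X)

@[simp]
theorem toMonoidAlgebra_of (x : X) :
    toMonoidAlgebra R X (of R x) = single (FreeMonoid.of x) 1 := by
  simp [toMonoidAlgebra, FreeAlgebra.equivMonoidAlgebraFreeMonoid]

theorem toMonoidAlgebra_injective (R X : Type*) [CommRing R] :
    Function.Injective (toMonoidAlgebra R X) :=
  FreeAlgebra.equivMonoidAlgebraFreeMonoid.injective.comp (toFreeAlgebra_injective R X)

theorem commute_toMonoidAlgebra {a b : FreeLieAlgebra R X} (h : ⁅a, b⁆ = 0) :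
    Commute (toMonoidAlgebra R X a) (toMonoidAlgebra R X b) := by
  rw [commute_iff_lie_eq, ← LieHom.map_lie, h, map_zero]

theorem coeff_toMonoidAlgebra_one (a : FreeLieAlgebra R X) :
    (toMonoidAlgebra R X a).coeff 1 = 0 := by
  let L : LieSubalgebra R (FreeLieAlgebra R X) :=
    { carrier := {a | (toMonoidAlgebra R X a).coeff 1 = 0}
      zero_mem' := by simp
      add_mem' := fun ha hb ↦ by simp_all
      smul_mem' := fun c a ha ↦ by simp_all
      lie_mem' := fun {a b} _ _ ↦ by
        simp [LieRing.of_associative_ring_bracket, coeff_mul_one, mul_comm] }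
  have hL : L = ⊤ := lieSubalgebra_eq_top_of_forall_of_mem fun x ↦ by simp [L]
  exact (hL ▸ LieSubalgebra.mem_top a : a ∈ L)

theorem exists_isLeading_toMonoidAlgebra [LinearOrder (FreeMonoid X)] {a : FreeLieAlgebra R X}
    (ha : a ≠ 0) : ∃ u ≠ 1, IsLeading (toMonoidAlgebra R X a) u := by
  obtain ⟨u, hu⟩ := exists_isLeading
    ((map_ne_zero_iff _ (toMonoidAlgebra_injective R X)).2 ha)
  refine ⟨u, ?_, hu⟩
  rintro rfl
  exact hu.coeff_ne_zero (coeff_toMonoidAlgebra_one a)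

theorem commute_of_of_isLeading_of_lie_eq_zero [IsDomain R] [LinearOrder (FreeMonoid X)]
    [MulLeftStrictMono (FreeMonoid X)] [MulRightStrictMono (FreeMonoid X)]
    {a b : FreeLieAlgebra R X} {u v : FreeMonoid X} {t : X} (hu : u ≠ 1)
    (ha : IsLeading (toMonoidAlgebra R X a) u) (hb : IsLeading (toMonoidAlgebra R X b) v)
    (hab : ⁅a, b⁆ = 0) (hat : ⁅a, ⁅of R t, b⁆⁆ = 0) : Commute v (FreeMonoid.of t) := by
  by_contra hvt
  have ht : IsLeading (toMonoidAlgebra R X (of R t)) (FreeMonoid.of t) := by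
    simpa using isLeading_single (FreeMonoid.of t) (one_ne_zero (α := R))
  have huv : Commute u v := ha.commute hb (commute_toMonoidAlgebra hab)
  have hcomm := commute_toMonoidAlgebra hat
  rw [LieHom.map_lie, LieRing.of_associative_ring_bracket] at hcomm
  refine hvt (commute_of_of_commute hu huv (Commute.symm ?_))
  rcases (ht.mul hb).sub_of_ne (hb.mul ht) fun h ↦ hvt h.symm with hlead | hlead
  · exact commute_of_commute_mul_right huv.symm (ha.commute hlead hcomm).symm
  · exact commute_of_commute_mul_left huv.symm (ha.commute hlead hcomm).symm

end LeadingWords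

end FreeLie

theorem freeLieAlgebra_anticommutative_general {R X : Type*} [CommRing R] [IsDomain R]
    [Nontrivial X] {I J : LieIdeal R (FreeLieAlgebra R X)} (hI : I ≠ ⊥) (hJ : J ≠ ⊥) :
    ⁅I, J⁆ ≠ (⊥ : LieIdeal R (FreeLieAlgebra R X)) := by
  intro hIJ
  rw [LieSubmodule.lie_eq_bot_iff] at hIJ
  obtain ⟨a, haI, ha⟩ := I.toSubmodule.exists_mem_ne_zero_of_ne_bot (by simpa using hI)
  obtain ⟨b, hbJ, hb⟩ := J.toSubmodule.exists_mem_ne_zero_of_ne_bot (by simpa using hJ)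
  obtain ⟨_, -⟩ := exists_wellFoundedLT X
  let := FreeLie.degLex X
  have := FreeLie.degLex_mulLeftStrictMono (X := X)
  have := FreeLie.degLex_mulRightStrictMono (X := X)
  obtain ⟨u, hu, hau⟩ := FreeLie.exists_isLeading_toMonoidAlgebra ha
  obtain ⟨v, hv, hbv⟩ := FreeLie.exists_isLeading_toMonoidAlgebra hb
  have hvt (t : X) : Commute v (FreeMonoid.of t) :=
    FreeLie.commute_of_of_isLeading_of_lie_eq_zero hu hau hbv (hIJ a haI b hbJ)
      (hIJ a haI _ (J.lie_mem hbJ))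
  obtain ⟨x, y, hxy⟩ := exists_pair_ne X
  exact hv (FreeLie.eq_one_of_commute_of hxy (hvt x) (hvt y))

theorem freeLieAlgebra_anticommutative
    (K : Type*) (X : Type*) [Field K] (x y : X) (hxy : x ≠ y) :
    (∀ I : LieIdeal K (FreeLieAlgebra K X), I ≠ ⊥ → ⁅I, I⁆ ≠ (⊥ : LieIdeal K (FreeLieAlgebra K X))) ∧
    (∀ I J : LieIdeal K (FreeLieAlgebra K X), I ≠ ⊥ → J ≠ ⊥ → I ⊓ J ≠ ⊥) := by
  have : Nontrivial X := ⟨x, y, hxy⟩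
  exact ⟨fun _ hI ↦ freeLieAlgebra_anticommutative_general hI hI, fun I J hI hJ h ↦
    freeLieAlgebra_anticommutative_general hI hJ (eq_bot_iff.2 (h ▸ LieSubmodule.lie_le_inf I J))⟩
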